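/- Let f ∈ F_2[x] be a monic irreducible polynomial of type (D,n) with n > 1. Then f^Q splits as f^Q = g_1 · g_2, where g_1 and g_2 are distinct monic irreducible polynomials of degree n over F_2 with g_2 = g_1* (the reciprocal of g_1), and either g_1 and g_2 are both of type (A,n) or they are both of type (D,n). -/

import Mathlib

open Polynomial

noncomputable def Qtrans (f : Polynomial (ZMod 2)) : Polynomial (ZMod 2) :=
  ∑ i ∈ Finset.range (f.natDegree + 1),
    C (f.coeff i) * X ^ (f.natDegree - i) * (X ^ 2 + 1) ^ i

lemma trace_sq {K : Type*} [Field K] [Algebra (ZMod 2) K] [FiniteDimensional (ZMod 2) K] (x : K) :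
  Algebra.trace (ZMod 2) K (x^2) = Algebra.trace (ZMod 2) K x := by
  have := Algebra.trace_eq_of_algEquiv (FiniteField.frobeniusAlgEquivOfAlgebraic (ZMod 2) K) x
  simpa using this

lemma solve {K : Type*} [Field K] [Algebra (ZMod 2) K] [FiniteDimensional (ZMod 2) K] (c : K)
  (hc : Algebra.trace (ZMod 2) K c = 0) : ∃ z : K, z^2 + z = c := by
  have : CharP K 2 := charP_of_injective_algebraMap (algebraMap (ZMod 2) K).injective 2
  let φ : K →ₗ[ZMod 2] K := (FiniteField.frobeniusAlgHom (ZMod 2) K).toLinearMap + LinearMap.id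
  have hφ : ∀ z, φ z = z^2 + z := fun z => by simp [φ]
  have hle : LinearMap.range φ ≤ LinearMap.ker (Algebra.trace (ZMod 2) K) := by
    rintro _ ⟨z, rfl⟩
    rw [LinearMap.mem_ker, hφ, map_add, trace_sq, CharTwo.add_self_eq_zero]
  have hker : LinearMap.ker φ ≤ Submodule.span (ZMod 2) {(1:K)} := by
    intro z hz
    rw [LinearMap.mem_ker, hφ] at hz
    have : z * (z+1) = 0 := by linear_combination hz
    rcases mul_eq_zero.1 this with h | h
    · rw [h]; exact zero_mem _
    · rw [CharTwo.add_eq_zero.1 h]; exact Submodule.mem_span_singleton_self _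
  have h1 := Submodule.finrank_mono hker
  rw [finrank_span_singleton one_ne_zero] at h1
  have h2 := LinearMap.finrank_range_add_finrank_ker φ
  have h3 := LinearMap.finrank_range_add_finrank_ker (Algebra.trace (ZMod 2) K)
  rw [LinearMap.range_eq_top.2 (Algebra.trace_surjective (ZMod 2) K), finrank_top, Module.finrank_self] at h3
  have := Submodule.eq_of_le_of_finrank_le hle (by omega)
  have hc' : c ∈ LinearMap.range φ := by rw [this]; exact hc
  obtain ⟨z, hz⟩ := hc'
  exact ⟨z, by rw [← hz, hφ]⟩
open IntermediateField in
lemma trace_gen {K : Type*} [Field K] [Algebra (ZMod 2) K] [FiniteDimensional (ZMod 2) K] (b : K)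
  (hb : (ZMod 2)⟮b⟯ = ⊤) : Algebra.trace (ZMod 2) K b = (minpoly (ZMod 2) b).nextCoeff := by
  rw [trace_eq_finrank_mul_minpoly_nextCoeff, hb, IntermediateField.finrank_top]
  simp
open IntermediateField in
lemma deg_gen {K : Type*} [Field K] [Algebra (ZMod 2) K] [FiniteDimensional (ZMod 2) K] (b : K)
  (hb : (ZMod 2)⟮b⟯ = ⊤) : (minpoly (ZMod 2) b).natDegree = Module.finrank (ZMod 2) K := by
  rw [← IntermediateField.adjoin.finrank (Algebra.IsIntegral.isIntegral b), hb, IntermediateField.finrank_top']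

lemma z2 (a : ZMod 2) (h : a ≠ 0) : a = 1 := by revert a; decide
open IntermediateField in
lemma gen_inv {K : Type*} [Field K] [Algebra (ZMod 2) K] (b : K)
  (hb : (ZMod 2)⟮b⟯ = ⊤) : (ZMod 2)⟮b⁻¹⟯ = ⊤ := by
  rw [eq_top_iff, ← hb, adjoin_simple_le_iff]
  simpa using inv_mem (mem_adjoin_simple_self (ZMod 2) b⁻¹)
open IntermediateField in
lemma minpoly_inv' {K : Type*} [Field K] [Algebra (ZMod 2) K] [FiniteDimensional (ZMod 2) K] (b : K)
  (hb : (ZMod 2)⟮b⟯ = ⊤) (h0 : b ≠ 0) : minpoly (ZMod 2) b⁻¹ = (minpoly (ZMod 2) b).reverse := by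
  have hi := Algebra.IsIntegral.isIntegral (R := ZMod 2) b
  have hc : (minpoly (ZMod 2) b).coeff 0 = 1 := z2 _ (minpoly.coeff_zero_ne_zero hi h0)
  have hm : (minpoly (ZMod 2) b).reverse.Monic := by
    rw [Monic, reverse_leadingCoeff, trailingCoeff_eq_coeff_zero (by rw [hc]; exact one_ne_zero), hc]
  let := invertibleOfNonzero h0
  refine (eq_of_monic_of_dvd_of_natDegree_le (minpoly.monic (Algebra.IsIntegral.isIntegral _)) hm (minpoly.dvd _ _ ?_) ?_).symm
  · have := (eval₂_reverse_eq_zero_iff (algebraMap (ZMod 2) K) b (minpoly (ZMod 2) b)).2 (minpoly.aeval _ _)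
    rwa [invOf_eq_inv] at this
  · rw [deg_gen _ (gen_inv b hb), ← deg_gen _ hb]
    exact reverse_natDegree_le _

lemma Qtrans_ne_zero (f : Polynomial (ZMod 2)) (hf : f.Monic) : Qtrans f ≠ 0 := by
  intro h
  have h1 : (Qtrans f).eval 0 = 1 := by
    rw [Qtrans, eval_finset_sum, Finset.sum_range_succ, Finset.sum_eq_zero]
    · simp [hf.coeff_natDegree]
    · intro i hi
      have : f.natDegree - i ≠ 0 := by have := Finset.mem_range.1 hi; omega
      simp [this]
  rw [h] at h1
  simp at h1

lemma Qtrans_monic (f : Polynomial (ZMod 2)) (hf : f.Monic) : (Qtrans f).Monic :=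
  z2 _ (leadingCoeff_ne_zero.2 (Qtrans_ne_zero f hf))

lemma Qtrans_deg (f : Polynomial (ZMod 2)) : (Qtrans f).natDegree ≤ 2 * f.natDegree := by
  refine natDegree_sum_le_of_forall_le _ _ fun i hi => ?_
  have hi' := Finset.mem_range.1 hi
  have h1 : (C (f.coeff i) * X ^ (f.natDegree - i) : (ZMod 2)[X]).natDegree ≤ f.natDegree - i :=
    natDegree_C_mul_X_pow_le _ _
  have h2 : (((X ^ 2 + 1 : (ZMod 2)[X])) ^ i).natDegree ≤ i * 2 := by
    refine natDegree_pow_le.trans (Nat.mul_le_mul_left _ ?_)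
    compute_degree
  refine natDegree_mul_le.trans ?_
  omega

lemma Qtrans_aeval {K : Type*} [Field K] [Algebra (ZMod 2) K] (f : Polynomial (ZMod 2)) (b : K)
    (h0 : b ≠ 0) : aeval b (Qtrans f) = b ^ f.natDegree * aeval (b + b⁻¹) f := by
  rw [Qtrans, map_sum, aeval_eq_sum_range, Finset.mul_sum]
  refine Finset.sum_congr rfl fun i hi => ?_
  have hi' := Finset.mem_range.1 hi
  obtain ⟨k, hk⟩ := Nat.exists_eq_add_of_le (Nat.lt_succ_iff.1 hi')
  have e : b ^ 2 + 1 = b * (b + b⁻¹) := by field_simp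
  simp only [map_mul, map_pow, map_add, aeval_X, aeval_C, map_one, Algebra.smul_def]
  rw [e, hk, Nat.add_sub_cancel_left, mul_pow, pow_add]
  ring

open IntermediateField in
theorem stmt_5_aux {K : Type*} [Field K] [Algebra (ZMod 2) K] [FiniteDimensional (ZMod 2) K]
    (n : ℕ) (hn : 1 < n) (f : Polynomial (ZMod 2)) (hmon : f.Monic) (hdeg : f.natDegree = n)
    (hD : f.coeff (n - 1) = 0 ∧ f.coeff 1 = 0) (a : K) (ha : (ZMod 2)⟮a⟯ = ⊤)
    (hm : minpoly (ZMod 2) a = f) :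
    ∃ b : K, b ≠ 0 ∧ (ZMod 2)⟮b⟯ = ⊤ ∧ b + b⁻¹ = a ∧ minpoly (ZMod 2) b ≠ minpoly (ZMod 2) b⁻¹ ∧
      Algebra.trace (ZMod 2) K b = Algebra.trace (ZMod 2) K b⁻¹ := by
  have : CharP K 2 := charP_of_injective_algebraMap (algebraMap (ZMod 2) K).injective 2
  have h0 : a ≠ 0 := by
    rintro rfl
    rw [minpoly.zero] at hm
    rw [← hm, natDegree_X] at hdeg
    omega
  have next (p : (ZMod 2)[X]) (hp : p.natDegree = n) : p.nextCoeff = p.coeff (n - 1) := by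
    rw [nextCoeff_of_natDegree_pos (by omega), hp]
  have hdi : f.reverse.natDegree = n := by
    rw [← hm, ← minpoly_inv' a ha h0, deg_gen _ (gen_inv a ha), ← deg_gen _ ha, hm, hdeg]
  have hta : Algebra.trace (ZMod 2) K a = 0 := by rw [trace_gen a ha, hm, next f hdeg, hD.1]
  have hti : Algebra.trace (ZMod 2) K a⁻¹ = 0 := by
    rw [trace_gen _ (gen_inv a ha), minpoly_inv' a ha h0, hm, next _ hdi, coeff_reverse, hdeg,
      revAt_le (by omega), show n - (n - 1) = 1 by omega, hD.2]
  obtain ⟨z, hz⟩ := solve ((a⁻¹) ^ 2) (by rw [trace_sq, hti])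
  have hb : (a * z) ^ 2 + a * (a * z) = 1 := by
    have : (a * z) ^ 2 + a * (a * z) = a ^ 2 * (z ^ 2 + z) := by ring
    rw [this, hz]
    field_simp
  have hb0 : a * z ≠ 0 := by
    intro h
    rw [h] at hb
    simp at hb
  have two : (2 : K) = 0 := CharTwo.two_eq_zero
  generalize a * z = b at hb hb0
  have hab : b + b⁻¹ = a := by
    field_simp
    linear_combination -hb + (b ^ 2) * two
  have hgen : (ZMod 2)⟮b⟯ = ⊤ := by
    rw [eq_top_iff, ← ha, adjoin_simple_le_iff, ← hab]
    have := mem_adjoin_simple_self (ZMod 2) b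
    exact add_mem this (inv_mem this)
  refine ⟨b, hb0, hgen, hab, ?_, ?_⟩
  · intro h
    have : Finite K := Module.finite_of_finite (ZMod 2)
    obtain ⟨s, hs⟩ := (Normal.minpoly_eq_iff_mem_orbit K).1 h.symm
    have hs' : s b = b⁻¹ := hs
    have hsa : s a = a := by
      rw [← hab, map_add, map_inv₀, hs', inv_inv, add_comm]
    have hall : ∀ x ∈ (ZMod 2)⟮a⟯, s x = x := by
      intro x hx
      induction hx using adjoin_induction with
      | mem x hx => rw [Set.mem_singleton_iff.1 hx, hsa]
      | algebraMap x => simp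
      | add x y _ _ hx hy => rw [map_add, hx, hy]
      | inv x _ hx => rw [map_inv₀, hx]
      | mul x y _ _ hx hy => rw [map_mul, hx, hy]
    have := hall b (by rw [ha]; trivial)
    rw [← hs', this, CharTwo.add_self_eq_zero] at hab
    exact h0 hab.symm
  · have : Algebra.trace (ZMod 2) K b + Algebra.trace (ZMod 2) K b⁻¹ = 0 := by
      rw [← map_add, hab, hta]
    exact CharTwo.add_eq_zero.1 this

theorem stmt_5 (n : ℕ) (hn : 1 < n) (f : Polynomial (ZMod 2))
    (hmon : f.Monic) (hirr : Irreducible f) (hdeg : f.natDegree = n)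
    (hD : f.coeff (n - 1) = 0 ∧ f.coeff 1 = 0) :
    ∃ g₁ g₂ : Polynomial (ZMod 2),
      Qtrans f = g₁ * g₂ ∧ g₁ ≠ g₂ ∧ g₂ = g₁.reverse ∧
      g₁.Monic ∧ Irreducible g₁ ∧ g₁.natDegree = n ∧
      g₂.Monic ∧ Irreducible g₂ ∧ g₂.natDegree = n ∧
      ((g₁.coeff (n - 1) = 1 ∧ g₁.coeff 1 = 1 ∧ g₂.coeff (n - 1) = 1 ∧ g₂.coeff 1 = 1) ∨
       (g₁.coeff (n - 1) = 0 ∧ g₁.coeff 1 = 0 ∧ g₂.coeff (n - 1) = 0 ∧ g₂.coeff 1 = 0)) := by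
  have : Fact (Irreducible f) := ⟨hirr⟩
  have hfd : FiniteDimensional (ZMod 2) (AdjoinRoot f) := (AdjoinRoot.powerBasis hirr.ne_zero).finite
  have ha := IntermediateField.adjoin_root_eq_top f
  have hm : minpoly (ZMod 2) (AdjoinRoot.root f) = f := by
    rw [AdjoinRoot.minpoly_root hirr.ne_zero, hmon.leadingCoeff]
    simp
  have hfin : Module.finrank (ZMod 2) (AdjoinRoot f) = n := by rw [← deg_gen _ ha, hm, hdeg]
  obtain ⟨b, hb0, hgen, hab, hne, htr⟩ := stmt_5_aux n hn f hmon hdeg hD _ ha hm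
  have i1 := Algebra.IsIntegral.isIntegral (R := ZMod 2) b
  have i2 := Algebra.IsIntegral.isIntegral (R := ZMod 2) b⁻¹
  have hgen' := gen_inv b hgen
  have d1 : (minpoly (ZMod 2) b).natDegree = n := (deg_gen b hgen).trans hfin
  have d2 : (minpoly (ZMod 2) b⁻¹).natDegree = n := (deg_gen _ hgen').trans hfin
  have hrev := minpoly_inv' b hgen hb0
  have next (p : (ZMod 2)[X]) (hp : p.natDegree = n) : p.nextCoeff = p.coeff (n - 1) := by
    rw [nextCoeff_of_natDegree_pos (by omega), hp]
  have c1 : (minpoly (ZMod 2) b).coeff (n - 1) = Algebra.trace _ _ b := by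
    rw [trace_gen b hgen, next _ d1]
  have c2 : (minpoly (ZMod 2) b⁻¹).coeff (n - 1) = Algebra.trace _ _ b := by
    rw [htr, trace_gen _ hgen', next _ d2]
  have c3 : (minpoly (ZMod 2) b).coeff 1 = Algebra.trace _ _ b := by
    rw [← c2, hrev, coeff_reverse, d1, revAt_le (by omega), show n - (n - 1) = 1 by omega]
  have c4 : (minpoly (ZMod 2) b⁻¹).coeff 1 = Algebra.trace _ _ b := by
    rw [← c1, hrev, coeff_one_reverse, next _ d1]
  refine ⟨minpoly (ZMod 2) b, minpoly (ZMod 2) b⁻¹, ?_, hne, hrev, minpoly.monic i1,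
    minpoly.irreducible i1, d1, minpoly.monic i2, minpoly.irreducible i2, d2, ?_⟩
  · have root : aeval (AdjoinRoot.root f) f = 0 := by
      have h := minpoly.aeval (ZMod 2) (AdjoinRoot.root f)
      rwa [hm] at h
    refine eq_of_monic_of_dvd_of_natDegree_le ((minpoly.monic i1).mul (minpoly.monic i2))
      (Qtrans_monic f hmon) (IsCoprime.mul_dvd ?_ (minpoly.dvd _ _ ?_) (minpoly.dvd _ _ ?_)) ?_
    · refine ((minpoly.irreducible i1).coprime_iff_not_dvd).2 fun h => hne ?_
      exact eq_of_monic_of_associated (minpoly.monic i1) (minpoly.monic i2)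
        ((minpoly.irreducible i1).associated_of_dvd (minpoly.irreducible i2) h)
    · rw [Qtrans_aeval f b hb0, hab, root, mul_zero]
    · rw [Qtrans_aeval f _ (inv_ne_zero hb0), inv_inv, add_comm, hab, root, mul_zero]
    · rw [(minpoly.monic i1).natDegree_mul (minpoly.monic i2), d1, d2]
      have := Qtrans_deg f
      omega
  · rw [c1, c2, c3, c4]
    by_cases h : Algebra.trace (ZMod 2) (AdjoinRoot f) b = 0
    · exact Or.inr ⟨h, h, h, h⟩
    · have h := z2 _ h
      exact Or.inl ⟨h, h, h, h⟩
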